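/- Let 1, α₁, α₂ be linearly independent over ℤ, let m_ν, m_{ν+1} be two consecutive best approximations, and put R_ν = 2·(M_{ν+1}·ζ_ν)^{−1}. Then there exists an integer point (x₁⁰, x₂⁰) such that x₁⁰ > 0, x₂⁰ > 0, max{x₁⁰, x₂⁰} ≤ R_ν, and ‖α₁x₁⁰ + α₂x₂⁰‖ < ζ_ν. -/

import Mathlib

/-- distance from a real number to the nearest integer -/
noncomputable def nint (ξ : ℝ) : ℝ := |ξ - round ξ|

/-- `1, α₁, α₂` are linearly independent over `ℤ` -/
def ZLinIndep (α₁ α₂ : ℝ) : Prop :=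
  ∀ a b c : ℤ, (a : ℝ) + b * α₁ + c * α₂ = 0 → a = 0 ∧ b = 0 ∧ c = 0

/-- the golden ratio τ = (1+√5)/2 -/
noncomputable def tau : ℝ := (1 + Real.sqrt 5) / 2

/-- the value of the linear form ζ(m) = m₀ + m₁α₁ + m₂α₂ at an integer vector m -/
noncomputable def zform (α₁ α₂ : ℝ) (m : ℤ × ℤ × ℤ) : ℝ :=
  (m.1 : ℝ) + m.2.1 * α₁ + m.2.2 * α₂

/-- the height M(m) = max{|m₁|, |m₂|} of an integer vector m = (m₀, m₁, m₂) -/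
def hgt (m : ℤ × ℤ × ℤ) : ℤ := max |m.2.1| |m.2.2|

/-- `m` is a best approximation (in the sense of the linear form) for `α₁, α₂`:
`|ζ(m)|` is minimal among all integer vectors `n` with `0 < max{|n₁|,|n₂|} ≤ max{|m₁|,|m₂|}`. -/
noncomputable def IsBestApprox (α₁ α₂ : ℝ) (m : ℤ × ℤ × ℤ) : Prop :=
  0 < hgt m ∧
  ∀ n : ℤ × ℤ × ℤ, 0 < hgt n → hgt n ≤ hgt m →
    |zform α₁ α₂ m| ≤ |zform α₁ α₂ n|

/-- `m` and `m'` are two consecutive best approximations (`m = m_ν`, `m' = m_{ν+1}`):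
both are best approximations, `M(m) < M(m')`, and no best approximation has height
strictly between them. -/
noncomputable def ConsecutiveBest (α₁ α₂ : ℝ) (m m' : ℤ × ℤ × ℤ) : Prop :=
  IsBestApprox α₁ α₂ m ∧ IsBestApprox α₁ α₂ m' ∧ hgt m < hgt m' ∧
  ∀ n : ℤ × ℤ × ℤ, IsBestApprox α₁ α₂ n → hgt n ≤ hgt m ∨ hgt m' ≤ hgt n

/-!
Write `ζ = ζ_ν`, `M = M_{ν+1}` and `R = 2 / (M ζ)`. As `m_ν` and `m_{ν+1}` are consecutive, every
integer vector `n` of positive height with `|ζ(n)| < ζ` has height at least `M`. The three forms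
`ζ(n)`, `n₁ - n₂`, `n₁ + n₂` have determinant `2 = ζ M R`, so Minkowski's theorem yields `n ≠ 0`
with `|ζ(n)| < ζ`, `|n₁ - n₂| < M` and `|n₁ + n₂| < R + 1`. Since `|n₁ - n₂| < M ≤ max |n₁| |n₂|`,
the coordinates `n₁` and `n₂` have the same sign, and up to replacing `n` by `-n` both are positive;
then `max n₁ n₂ ≤ n₁ + n₂ - 1 < R`.
-/

section Minkowski

open MeasureTheory

variable {ι : Type*} [Fintype ι]

lemma exists_int_ne_zero_mem_of_convex {s : Set (ι → ℝ)} (hsymm : ∀ x ∈ s, -x ∈ s)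
    (hconv : Convex ℝ s) (hvol : 2 ^ Fintype.card ι < volume s) :
    ∃ z : ι → ℤ, z ≠ 0 ∧ (fun i ↦ (z i : ℝ)) ∈ s := by
  let b := Pi.basisFun ℝ ι
  have : Countable (Submodule.span ℤ (Set.range b)).toAddSubgroup :=
    inferInstanceAs (Countable (Submodule.span ℤ (Set.range b)))
  have hfund : volume (ZSpan.fundamentalDomain b) = 1 := by
    simp [b, ZSpan.fundamentalDomain_pi_basisFun, volume_pi]
  obtain ⟨⟨x, hxL⟩, hx0, hxs⟩ := exists_ne_zero_mem_lattice_of_measure_mul_two_pow_lt_measure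
    (ZSpan.isAddFundamentalDomain' b volume) hsymm hconv (by simpa [hfund] using hvol)
  choose z hz using (b.mem_span_iff_repr_mem ℤ x).1 hxL
  obtain rfl : (fun i ↦ (z i : ℝ)) = x := funext hz
  refine ⟨z, ?_, hxs⟩
  rintro rfl
  exact hx0 (Subtype.ext (by ext; simp))

lemma exists_int_ne_zero_abs_mulVec_lt [DecidableEq ι] {A : Matrix ι ι ℝ} (hA : A.det ≠ 0)
    {c : ι → ℝ} (hc : ∀ i, 0 < c i) (hdet : |A.det| < ∏ i, c i) :
    ∃ z : ι → ℤ, z ≠ 0 ∧ ∀ i, |A.mulVec (fun j ↦ (z j : ℝ)) i| < c i := by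
  let box : Set (ι → ℝ) := Set.univ.pi fun i ↦ Set.Ioo (-c i) (c i)
  have mem_box {x : ι → ℝ} : x ∈ box ↔ ∀ i, |x i| < c i := by simp [box, abs_lt]
  have hbox : volume box = 2 ^ Fintype.card ι * ENNReal.ofReal (∏ i, c i) := by
    rw [Real.volume_pi_Ioo, ENNReal.ofReal_prod_of_nonneg fun i _ ↦ (hc i).le]
    simp [← two_mul, ENNReal.ofReal_mul, Finset.prod_mul_distrib]
  have hdet' : LinearMap.det A.toLin' ≠ 0 := by rwa [LinearMap.det_toLin']
  have hratio : 1 < |A.det⁻¹| * ∏ i, c i := by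
    rwa [abs_inv, lt_inv_mul_iff₀ (abs_pos.2 hA), mul_one]
  obtain ⟨z, hz0, hz⟩ := exists_int_ne_zero_mem_of_convex (s := A.toLin' ⁻¹' box)
    (fun x hx ↦ by simpa [mem_box, Matrix.mulVec_neg] using hx)
    ((convex_pi fun i _ ↦ convex_Ioo _ _).linear_preimage _) <| by
      rw [Measure.addHaar_preimage_linearMap volume hdet', LinearMap.det_toLin', hbox,
        mul_left_comm, ← ENNReal.ofReal_mul (abs_nonneg _)]
      simpa using ENNReal.mul_lt_mul_right (a := 2 ^ Fintype.card ι) (by simp) (by simp)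
        (ENNReal.one_lt_ofReal.2 hratio)
  exact ⟨z, hz0, mem_box.1 hz⟩

end Minkowski

lemma mul_pos_of_abs_sub_lt_max {R : Type*} [Ring R] [LinearOrder R] [IsStrictOrderedRing R]
    {x y : R} (h : |x - y| < max |x| |y|) : 0 < x * y := by
  by_contra! hxy
  have habs : |x - y| = |x| + |y| := by
    rw [sub_eq_add_neg, ← abs_neg y, abs_add_eq_add_abs_iff]
    simpa [mul_nonpos_iff] using hxy
  rw [habs] at h
  exact h.not_ge (max_le (by simp) (by simp))

section LinearForm

variable {α₁ α₂ : ℝ}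

lemma zform_neg (n : ℤ × ℤ × ℤ) : zform α₁ α₂ (-n) = -zform α₁ α₂ n := by
  simp only [zform, Prod.fst_neg, Prod.snd_neg, Int.cast_neg]
  ring

lemma ZLinIndep.zform_ne_zero (h : ZLinIndep α₁ α₂) {n : ℤ × ℤ × ℤ} (hn : 0 < hgt n) :
    zform α₁ α₂ n ≠ 0 := by
  intro h0
  obtain ⟨-, h₁, h₂⟩ := h _ _ _ h0
  simp [hgt, h₁, h₂] at hn

lemma nint_le_abs_zform (n : ℤ × ℤ × ℤ) :
    nint (α₁ * n.2.1 + α₂ * n.2.2) ≤ |zform α₁ α₂ n| := by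
  refine (round_le _ (-n.1)).trans_eq (congrArg abs ?_)
  simp only [zform, Int.cast_neg]
  ring

lemma hgt_pos_of_abs_zform_lt_one {n : ℤ × ℤ × ℤ} (hn : n ≠ 0) (hζ : |zform α₁ α₂ n| < 1) :
    0 < hgt n := by
  obtain ⟨a, b, c⟩ := n
  by_contra! hle
  obtain ⟨hb, hc⟩ : b = 0 ∧ c = 0 := by simpa [hgt] using hle
  subst hb hc
  have ha : |a| < 1 := by
    have : |(a : ℝ)| < 1 := by simpa [zform] using hζ
    exact_mod_cast this
  exact hn (by simp [Int.abs_lt_one_iff.1 ha])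

/-- An integer vector `(·, q₁, q₂)` at which the linear form `ζ` is smallest in absolute
value. -/
noncomputable def nearestLift (α₁ α₂ : ℝ) (q : ℤ × ℤ) : ℤ × ℤ × ℤ :=
  (-round (α₁ * q.1 + α₂ * q.2), q)

lemma abs_zform_nearestLift (q : ℤ × ℤ) :
    |zform α₁ α₂ (nearestLift α₁ α₂ q)| = nint (α₁ * q.1 + α₂ * q.2) := by
  simp only [zform, nearestLift, nint, Int.cast_neg]
  congr 1
  ring

lemma IsBestApprox.abs_zform_le_half {m : ℤ × ℤ × ℤ} (hm : IsBestApprox α₁ α₂ m) :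
    |zform α₁ α₂ m| ≤ 1 / 2 :=
  calc |zform α₁ α₂ m|
    _ ≤ |zform α₁ α₂ (nearestLift α₁ α₂ m.2)| := hm.2 _ hm.1 le_rfl
    _ = nint (α₁ * m.2.1 + α₂ * m.2.2) := abs_zform_nearestLift _
    _ ≤ 1 / 2 := abs_sub_round _

lemma exists_isBestApprox_hgt_le {n : ℤ × ℤ × ℤ} (hn : 0 < hgt n) :
    ∃ p, IsBestApprox α₁ α₂ p ∧ hgt p ≤ hgt n ∧ |zform α₁ α₂ p| ≤ |zform α₁ α₂ n| := by
  let S : Set (ℤ × ℤ) := {q | 0 < hgt (0, q) ∧ hgt (0, q) ≤ hgt n}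
  have hfin : S.Finite := by
    refine (Set.finite_Icc (-hgt n, -hgt n) (hgt n, hgt n)).subset fun q hq ↦ ?_
    obtain ⟨h₁, h₂⟩ := max_le_iff.1 hq.2
    exact ⟨⟨(abs_le.1 h₁).1, (abs_le.1 h₂).1⟩, ⟨(abs_le.1 h₁).2, (abs_le.1 h₂).2⟩⟩
  obtain ⟨q, hq, hmin⟩ := S.exists_min_image (fun q ↦ |zform α₁ α₂ (nearestLift α₁ α₂ q)|)
    hfin ⟨n.2, hn, le_rfl⟩
  have hle (k : ℤ × ℤ × ℤ) (hk : k.2 ∈ S) :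
      |zform α₁ α₂ (nearestLift α₁ α₂ q)| ≤ |zform α₁ α₂ k| :=
    (hmin k.2 hk).trans ((abs_zform_nearestLift _).trans_le (nint_le_abs_zform k))
  exact ⟨nearestLift α₁ α₂ q, ⟨hq.1, fun k hk hkq ↦ hle k ⟨hk, hkq.trans hq.2⟩⟩, hq.2,
    hle n ⟨hn, le_rfl⟩⟩

lemma ConsecutiveBest.hgt_le_of_abs_zform_lt {m m' n : ℤ × ℤ × ℤ}
    (hc : ConsecutiveBest α₁ α₂ m m') (hn : 0 < hgt n)
    (hζ : |zform α₁ α₂ n| < |zform α₁ α₂ m|) : hgt m' ≤ hgt n := by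
  obtain ⟨hm, -, -, hgap⟩ := hc
  obtain ⟨p, hp, hpn, hpζ⟩ := exists_isBestApprox_hgt_le (α₁ := α₁) (α₂ := α₂) hn
  obtain hpm | hpm := hgap p hp
  · exact absurd (hm.2 p hp.1 hpm) (hpζ.trans_lt hζ).not_ge
  · exact hpm.trans hpn

lemma exists_ne_zero_abs_zform_lt {A B C : ℝ} (hA : 0 < A) (hB : 0 < B) (hC : 0 < C)
    (hABC : 2 < A * B * C) :
    ∃ n : ℤ × ℤ × ℤ, n ≠ 0 ∧ |zform α₁ α₂ n| < A ∧ |(n.2.1 : ℝ) - n.2.2| < B ∧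
      |(n.2.1 : ℝ) + n.2.2| < C := by
  let forms : Matrix (Fin 3) (Fin 3) ℝ := !![1, α₁, α₂; 0, 1, -1; 0, 1, 1]
  have hdet : forms.det = 2 := by
    simp [forms, Matrix.det_fin_three, one_add_one_eq_two]
  obtain ⟨z, hz0, hz⟩ := exists_int_ne_zero_abs_mulVec_lt (A := forms) (c := ![A, B, C])
    (by simp [hdet]) (by simp [Fin.forall_fin_succ, hA, hB, hC])
    (by simpa [hdet, Fin.prod_univ_three] using hABC)
  refine ⟨(z 0, z 1, z 2), fun h ↦ hz0 ?_, ?_, ?_, ?_⟩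
  · simpa [funext_iff, Fin.forall_fin_succ] using h
  · simpa [forms, zform, Matrix.mulVec, dotProduct, Fin.sum_univ_three, mul_comm] using hz 0
  · simpa [forms, Matrix.mulVec, dotProduct, Fin.sum_univ_three, sub_eq_add_neg] using hz 1
  · simpa [forms, Matrix.mulVec, dotProduct, Fin.sum_univ_three] using hz 2

lemma exists_pos_add_lt_of_forall_le_hgt {ζ M C : ℝ} (hζ0 : 0 < ζ) (hζ1 : ζ ≤ 1) (hM : 0 < M)
    (hvol : 2 < ζ * M * C)
    (hgap : ∀ n : ℤ × ℤ × ℤ, 0 < hgt n → |zform α₁ α₂ n| < ζ → M ≤ hgt n) :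
    ∃ n : ℤ × ℤ × ℤ, 0 < n.2.1 ∧ 0 < n.2.2 ∧ (n.2.1 : ℝ) + n.2.2 < C ∧ |zform α₁ α₂ n| < ζ := by
  have hC : 0 < C := pos_of_mul_pos_right (two_pos.trans hvol) (by positivity)
  obtain ⟨n, hn0, hnζ, hsub, hadd⟩ := exists_ne_zero_abs_zform_lt hζ0 hM hC hvol
  have hMn : M ≤ hgt n := hgap n (hgt_pos_of_abs_zform_lt_one hn0 (hnζ.trans_le hζ1)) hnζ
  have hsign : 0 < n.2.1 * n.2.2 := by
    have : |(n.2.1 : ℝ) - n.2.2| < hgt n := hsub.trans_le hMn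
    exact mul_pos_of_abs_sub_lt_max (by exact_mod_cast this)
  obtain ⟨h₁, h₂⟩ | ⟨h₁, h₂⟩ := mul_pos_iff.1 hsign
  · exact ⟨n, h₁, h₂, (abs_lt.1 hadd).2, hnζ⟩
  · refine ⟨-n, neg_pos.2 h₁, neg_pos.2 h₂, ?_, by rwa [zform_neg, abs_neg]⟩
    simp only [Prod.snd_neg, Prod.fst_neg, Int.cast_neg]
    linarith [(abs_lt.1 hadd).1]

theorem lemma1_positive_point_general {m m' : ℤ × ℤ × ℤ} (hc : ConsecutiveBest α₁ α₂ m m')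
    (hζ : zform α₁ α₂ m ≠ 0) :
    ∃ x : ℤ × ℤ, 0 < x.1 ∧ 0 < x.2 ∧
      ((max x.1 x.2 : ℤ) : ℝ) < 2 * ((hgt m' : ℝ) * |zform α₁ α₂ m|)⁻¹ ∧
      nint (α₁ * x.1 + α₂ * x.2) < |zform α₁ α₂ m| := by
  have hM : (0 : ℝ) < hgt m' := by exact_mod_cast hc.2.1.1
  have hζ0 : 0 < |zform α₁ α₂ m| := abs_pos.2 hζ
  have hζ1 : |zform α₁ α₂ m| ≤ 1 := hc.1.abs_zform_le_half.trans (by norm_num)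
  set R : ℝ := 2 * ((hgt m' : ℝ) * |zform α₁ α₂ m|)⁻¹ with hR
  have hvol : 2 < |zform α₁ α₂ m| * hgt m' * (R + 1) := by
    have : |zform α₁ α₂ m| * hgt m' * R = 2 := by rw [hR]; field_simp
    linarith [mul_pos hζ0 hM]
  obtain ⟨n, h₁, h₂, hadd, hn⟩ := exists_pos_add_lt_of_forall_le_hgt hζ0 hζ1 hM hvol
    fun n hn hnζ ↦ Int.cast_le.2 (hc.hgt_le_of_abs_zform_lt hn hnζ)
  refine ⟨n.2, h₁, h₂, ?_, (nint_le_abs_zform n).trans_lt hn⟩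
  have hmax : max n.2.1 n.2.2 + 1 ≤ n.2.1 + n.2.2 := by omega
  have hmax' : ((max n.2.1 n.2.2 : ℤ) : ℝ) + 1 ≤ n.2.1 + n.2.2 := by exact_mod_cast hmax
  linarith

end LinearForm

/-- Lemma 1: with `R_ν = 2(M_{ν+1}ζ_ν)⁻¹` there is an integer point with positive
coordinates, height ≤ R_ν, and ‖α₁x₁⁰ + α₂x₂⁰‖ < ζ_ν. -/
theorem lemma1_positive_point (α₁ α₂ : ℝ) (h : ZLinIndep α₁ α₂)
    (m m' : ℤ × ℤ × ℤ) (hc : ConsecutiveBest α₁ α₂ m m') :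
    ∃ x : ℤ × ℤ, 0 < x.1 ∧ 0 < x.2 ∧
      ((max x.1 x.2 : ℤ) : ℝ) ≤ 2 * ((hgt m' : ℝ) * |zform α₁ α₂ m|)⁻¹ ∧
      nint (α₁ * x.1 + α₂ * x.2) < |zform α₁ α₂ m| :=
  let ⟨x, h₁, h₂, hmax, hx⟩ := lemma1_positive_point_general hc (h.zform_ne_zero hc.1.1)
  ⟨x, h₁, h₂, hmax.le, hx⟩
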